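/- Every K-algebra automorphism of the polynomial ring K[x,y] in two variables over an algebraically closed field K of characteristic zero is tame, i.e., it is a composition of elementary and linear automorphisms. -/

import Mathlib

open MvPolynomial

/-- An automorphism of `K[x_1,…,x_n]` is *elementary* if it sends some variable `x_i` to
`x_i + F`, where `F` is a polynomial in the remaining variables, and fixes all other variables. -/
def IsElementary {K : Type*} [CommRing K] {n : ℕ}
    (φ : MvPolynomial (Fin n) K ≃ₐ[K] MvPolynomial (Fin n) K) : Prop :=
  ∃ (i : Fin n) (F : MvPolynomial (Fin n) K), i ∉ F.vars ∧
    φ (X i) = X i + F ∧ ∀ j : Fin n, j ≠ i → φ (X j) = X j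

/-- An automorphism of `K[x_1,…,x_n]` is *linear* if it sends each variable to a
`K`-linear combination of the variables. -/
def IsLinearAut {K : Type*} [CommRing K] {n : ℕ}
    (φ : MvPolynomial (Fin n) K ≃ₐ[K] MvPolynomial (Fin n) K) : Prop :=
  ∀ i : Fin n, ∃ c : Fin n → K, φ (X i) = ∑ j : Fin n, C (c j) * X j

/-- An automorphism is *tame* if it is a composition of elementary and linear automorphisms. -/
def IsTame {K : Type*} [CommRing K] {n : ℕ}
    (φ : MvPolynomial (Fin n) K ≃ₐ[K] MvPolynomial (Fin n) K) : Prop :=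
  ∃ l : List (MvPolynomial (Fin n) K ≃ₐ[K] MvPolynomial (Fin n) K),
    (∀ ψ ∈ l, IsElementary ψ ∨ IsLinearAut ψ) ∧ φ = l.prod

/-!
Let `f = φ x` for an automorphism `φ` of `K[x, y]`. The Jacobian derivation `u ↦ ∂(f, u) / ∂(x, y)`
is locally nilpotent, hence so is the one attached to any weighted leading form of `f`. The kernel
of a locally nilpotent derivation is factorially closed; this forces the Newton polygon of `f` to
be a triangle with a vertex on each axis, and the leading form along its hypotenuse to be
`c (y ^ q - μ x ^ p) ^ M` with `p` and `q` coprime. The derivation attached to such a form sends `x`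
to a kernel element times `y ^ (q - 1)` and `y` to a kernel element times `x ^ (p - 1)`, which
contradicts local nilpotency unless `p = 1` or `q = 1`. In these cases an elementary automorphism
turns the leading form into a pure power of one variable and lowers the degree of `f`. The descent
ends when `f` involves a single variable, and then `φ` is triangular up to exchanging `x` and `y`.
-/

section LocallyNilpotent

open Finset
open scoped Nat Polynomial

theorem iterate_derivation_mul {R A : Type*} [CommSemiring R] [CommSemiring A] [Algebra R A]
    (D : Derivation R A A) (n : ℕ) (u v : A) :
    D^[n] (u * v) =
      ∑ ij ∈ antidiagonal n, n.choose ij.1 • (D^[ij.1] u * D^[ij.2] v) := by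
  induction n with
  | zero => simp
  | succ n ih =>
    rw [sum_antidiagonal_choose_succ_nsmul (fun i j => D^[i] u * D^[j] v) n]
    simp only [Function.iterate_succ_apply', ih, map_sum, map_nsmul, Derivation.leibniz,
      smul_eq_mul, smul_add, sum_add_distrib]
    congr 1
    refine sum_congr rfl fun ij hij => ?_
    rw [n.choose_symm_of_eq_add (mem_antidiagonal.1 hij).symm, mul_comm]

theorem iterate_derivation_eq_zero_of_le {R A : Type*} [CommSemiring R] [CommSemiring A]
    [Algebra R A] {D : Derivation R A A} {u : A} {m n : ℕ} (h : D^[m] u = 0) (hmn : m ≤ n) :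
    D^[n] u = 0 := by
  rw [← Nat.sub_add_cancel hmn, Function.iterate_add_apply, h, iterate_map_zero]

/-- A derivation `D` is locally nilpotent if every element is killed by some iterate of `D`. -/
def IsLocallyNilpotent {R A : Type*} [CommSemiring R] [CommSemiring A] [Algebra R A]
    (D : Derivation R A A) : Prop :=
  ∀ u, ∃ n, D^[n] u = 0

namespace IsLocallyNilpotent

theorem of_adjoin_eq_top {R A : Type*} [CommSemiring R] [CommSemiring A] [Algebra R A]
    {D : Derivation R A A} {s : Set A} (hs : Algebra.adjoin R s = ⊤)
    (h : ∀ u ∈ s, ∃ n, D^[n] u = 0) : IsLocallyNilpotent D := by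
  intro u
  have hu : u ∈ Algebra.adjoin R s := hs ▸ Algebra.mem_top
  induction hu using Algebra.adjoin_induction with
  | mem u hu => exact h u hu
  | algebraMap r => exact ⟨1, D.map_algebraMap r⟩
  | add u v _ _ hu hv =>
    obtain ⟨m, hm⟩ := hu
    obtain ⟨n, hn⟩ := hv
    refine ⟨m + n, ?_⟩
    rw [iterate_map_add, iterate_derivation_eq_zero_of_le hm (m.le_add_right n),
      iterate_derivation_eq_zero_of_le hn (n.le_add_left m), add_zero]
  | mul u v _ _ hu hv =>
    obtain ⟨m, hm⟩ := hu
    obtain ⟨n, hn⟩ := hv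
    refine ⟨m + n, ?_⟩
    rw [iterate_derivation_mul]
    refine sum_eq_zero fun ⟨i, j⟩ hij => ?_
    rcases le_or_gt m i with hi | hi
    · rw [iterate_derivation_eq_zero_of_le hm hi, zero_mul, smul_zero]
    · have hj : n ≤ j := by have := mem_antidiagonal.1 hij; omega
      rw [iterate_derivation_eq_zero_of_le hn hj, mul_zero, smul_zero]

section Exp

variable {K R : Type*} [Field K] [CommRing R] [Algebra K R] {D : Derivation K R R}

theorem exists_coeff_eq (hD : IsLocallyNilpotent D) (u : R) :
    ∃ p : R[X], ∀ n, p.coeff n = (n ! : K)⁻¹ • D^[n] u := by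
  obtain ⟨N, hN⟩ := hD u
  refine ⟨∑ n ∈ range N, Polynomial.monomial n ((n ! : K)⁻¹ • D^[n] u), fun n => ?_⟩
  simp only [Polynomial.finsetSum_coeff, Polynomial.coeff_monomial, sum_ite_eq', mem_range,
    ite_eq_left_iff, not_lt]
  intro hn
  rw [iterate_derivation_eq_zero_of_le hN hn, smul_zero]

variable [CharZero K]

theorem exists_algHom_coeff_eq (hD : IsLocallyNilpotent D) :
    ∃ e : R →ₐ[K] R[X], ∀ u n, (e u).coeff n = (n ! : K)⁻¹ • D^[n] u := by
  choose e he using hD.exists_coeff_eq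
  have map_add u v : e (u + v) = e u + e v := by
    ext n
    simp only [Polynomial.coeff_add, he, iterate_map_add, smul_add]
  have map_smul (c : K) u : e (c • u) = c • e u := by
    have smul_comm_D : Function.Commute (fun v : R => c • v) D := fun v => (D.map_smul c v).symm
    ext n
    rw [Polynomial.coeff_smul, he, he, ← (smul_comm_D.iterate_right n).eq u, smul_comm]
  have map_one : e 1 = 1 := by
    ext n
    rw [he, Polynomial.coeff_one]
    rcases n with - | n
    · simp
    · simp [Function.iterate_succ_apply]
  have map_mul u v : e (u * v) = e u * e v := by
    ext n
    simp only [Polynomial.coeff_mul, he, iterate_derivation_mul, smul_sum]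
    refine sum_congr rfl fun ij hij => ?_
    rw [← mem_antidiagonal.1 hij, smul_mul_smul_comm, ← Nat.cast_smul_eq_nsmul K, smul_smul,
      Nat.cast_add_choose]
    congr 1
    have := Nat.cast_ne_zero (R := K).2 (Nat.factorial_ne_zero (ij.1 + ij.2))
    field_simp
  exact ⟨AlgHom.ofLinearMap ⟨⟨e, map_add⟩, map_smul⟩ map_one map_mul, he⟩

/-- The exponential `u ↦ ∑ Dⁿ u / n! · Tⁿ` of a locally nilpotent derivation `D`. The degree of
`exp u` in `T` is the order of nilpotency of `D` at `u`, and it is additive on products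
because `exp` is a ring homomorphism. -/
noncomputable def exp (hD : IsLocallyNilpotent D) : R →ₐ[K] R[X] :=
  hD.exists_algHom_coeff_eq.choose

theorem coeff_exp (hD : IsLocallyNilpotent D) (u : R) (n : ℕ) :
    (hD.exp u).coeff n = (n ! : K)⁻¹ • D^[n] u :=
  hD.exists_algHom_coeff_eq.choose_spec u n

theorem exp_injective (hD : IsLocallyNilpotent D) : Function.Injective hD.exp := by
  intro u v h
  simpa [coeff_exp] using congrArg (Polynomial.coeff · 0) h

theorem derivative_exp (hD : IsLocallyNilpotent D) (u : R) :
    Polynomial.derivative (hD.exp u) = hD.exp (D u) := by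
  ext n
  have hn : (n : K) + 1 ≠ 0 := by exact_mod_cast n.succ_ne_zero
  rw [Polynomial.coeff_derivative, coeff_exp, coeff_exp, Function.iterate_succ_apply,
    Nat.factorial_succ, ← Nat.cast_succ, mul_comm, ← nsmul_eq_mul,
    ← Nat.cast_smul_eq_nsmul K, smul_smul]
  congr 1
  push_cast
  field_simp

theorem exp_of_apply_eq_zero (hD : IsLocallyNilpotent D) {u : R} (hu : D u = 0) :
    hD.exp u = Polynomial.C u := by
  ext n
  rw [coeff_exp, Polynomial.coeff_C]
  rcases n with - | n
  · simp
  · simp [Function.iterate_succ_apply, hu]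

theorem natDegree_exp_eq_zero_iff (hD : IsLocallyNilpotent D) {u : R} :
    (hD.exp u).natDegree = 0 ↔ D u = 0 := by
  refine ⟨fun h => ?_, fun h => by rw [hD.exp_of_apply_eq_zero h, Polynomial.natDegree_C]⟩
  apply hD.exp_injective
  rw [← derivative_exp, Polynomial.derivative_of_natDegree_zero h, map_zero]

variable [IsDomain R]

theorem natDegree_exp_mul (hD : IsLocallyNilpotent D) {u v : R} (hu : u ≠ 0) (hv : v ≠ 0) :
    (hD.exp (u * v)).natDegree = (hD.exp u).natDegree + (hD.exp v).natDegree := by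
  rw [map_mul, Polynomial.natDegree_mul] <;> rwa [map_ne_zero_iff _ hD.exp_injective]

theorem apply_eq_zero_of_dvd (hD : IsLocallyNilpotent D) {u v : R} (huv : u ∣ v) (hv : v ≠ 0)
    (hDv : D v = 0) : D u = 0 := by
  obtain ⟨w, rfl⟩ := huv
  have h := hD.natDegree_exp_eq_zero_iff.2 hDv
  rw [hD.natDegree_exp_mul (left_ne_zero_of_mul hv) (right_ne_zero_of_mul hv)] at h
  exact hD.natDegree_exp_eq_zero_iff.1 (Nat.add_eq_zero_iff.1 h).1

theorem natDegree_exp_apply_add_one (hD : IsLocallyNilpotent D) {u : R} (hu : D u ≠ 0) :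
    (hD.exp (D u)).natDegree + 1 = (hD.exp u).natDegree := by
  have : CharZero R := charZero_of_injective_algebraMap (algebraMap K R).injective
  have hpos := Nat.pos_of_ne_zero (mt hD.natDegree_exp_eq_zero_iff.1 hu)
  rw [← derivative_exp, Polynomial.natDegree_derivative, Nat.sub_add_cancel hpos]

theorem eq_zero_or_eq_zero_of_apply_eq_mul_pow (hD : IsLocallyNilpotent D) {x y a b : R} {k l : ℕ}
    (hx : D x = a * y ^ k) (hy : D y = b * x ^ l) (ha : D a = 0) (hb : D b = 0)
    (ha0 : a ≠ 0) (hb0 : b ≠ 0) (hx0 : x ≠ 0) (hy0 : y ≠ 0) : k = 0 ∨ l = 0 := by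
  have natDegree_exp_eq {u v c : R} {m : ℕ} (hu : D u = c * v ^ m) (hc : D c = 0) (hc0 : c ≠ 0)
      (hv0 : v ≠ 0) : (hD.exp u).natDegree = m * (hD.exp v).natDegree + 1 := by
    have hDu : D u ≠ 0 := hu ▸ mul_ne_zero hc0 (pow_ne_zero m hv0)
    rw [← hD.natDegree_exp_apply_add_one hDu, hu, hD.natDegree_exp_mul hc0 (pow_ne_zero m hv0),
      hD.natDegree_exp_eq_zero_iff.2 hc, map_pow, Polynomial.natDegree_pow, zero_add]
  have hdx := natDegree_exp_eq hx ha ha0 hy0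
  have hdy := natDegree_exp_eq hy hb hb0 hx0
  by_contra! h
  have hxy := Nat.le_mul_of_pos_left (hD.exp y).natDegree (Nat.pos_of_ne_zero h.1)
  have hyx := Nat.le_mul_of_pos_left (hD.exp x).natDegree (Nat.pos_of_ne_zero h.2)
  omega

end Exp

end IsLocallyNilpotent

end LocallyNilpotent

section BinaryForms

open Finset
open scoped Polynomial

theorem algHom_aeval_pair {R A B : Type*} [CommSemiring R] [CommSemiring A] [CommSemiring B]
    [Algebra R A] [Algebra R B] (f : A →ₐ[R] B) (u v : A) (P : MvPolynomial (Fin 2) R) :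
    f (aeval ![u, v] P) = aeval ![f u, f v] P := by
  rw [← AlgHom.comp_apply, comp_aeval]
  congr 2
  ext i : 1
  fin_cases i <;> rfl

theorem aeval_homogenize {R A : Type*} [CommSemiring R] [CommSemiring A] [Algebra R A]
    (G : R[X]) (M : ℕ) (u v : A) :
    aeval ![u, v] (G.homogenize M) =
      ∑ kl ∈ antidiagonal M, algebraMap R A (G.coeff kl.1) * (u ^ kl.1 * v ^ kl.2) := by
  simp [Polynomial.homogenize, aeval_monomial, Finsupp.prod_fintype, Fin.prod_univ_two]

theorem aeval_homogenize_mul_self {R A : Type*} [CommSemiring R] [CommSemiring A] [Algebra R A]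
    {G : R[X]} {M : ℕ} (hM : G.natDegree ≤ M) (t v : A) :
    aeval ![t * v, v] (G.homogenize M) = Polynomial.aeval t G * v ^ M := by
  rw [aeval_homogenize, Polynomial.aeval_eq_sum_range' (Nat.lt_succ_of_le hM), sum_mul,
    Nat.sum_antidiagonal_eq_sum_range_succ_mk]
  refine sum_congr rfl fun k hk => ?_
  rw [Algebra.smul_def, mul_pow, mul_assoc, mul_assoc, ← pow_add,
    Nat.add_sub_of_le (mem_range_succ_iff.1 hk)]

theorem aeval_homogenize_natDegree_zero_right {R A : Type*} [CommSemiring R] [CommSemiring A]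
    [Algebra R A] (G : R[X]) (u : A) :
    aeval ![u, 0] (G.homogenize G.natDegree) =
      algebraMap R A G.leadingCoeff * u ^ G.natDegree := by
  rw [aeval_homogenize, sum_eq_single_of_mem (G.natDegree, 0) (by simp)]
  · simp
  · rintro ⟨k, l⟩ hkl hne
    have hl : l ≠ 0 := by
      rintro rfl
      exact hne (Prod.ext (mem_antidiagonal.1 hkl) rfl)
    simp [hl]

theorem aeval_C_eq_zero_iff {R σ : Type*} [CommSemiring R] {G : R[X]} {r : R} :
    Polynomial.aeval (C r : MvPolynomial σ R) G = 0 ↔ G.IsRoot r := by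
  rw [← algebraMap_eq, Polynomial.aeval_algebraMap_apply_eq_algebraMap_eval, algebraMap_eq,
    C_eq_zero, Polynomial.IsRoot.def]

theorem homogenize_C_mul_X_sub_C_pow {R : Type*} [CommRing R] (c μ : R) (M : ℕ) :
    (Polynomial.C c * (Polynomial.X - Polynomial.C μ) ^ M).homogenize M =
      C c * (X 0 - C μ * X 1) ^ M := by
  refine Polynomial.homogenize_eq_of_isHomogeneous ?_ (by simp)
  simpa using (isHomogeneous_C (Fin 2) c).mul
    (((isHomogeneous_X R 0).sub ((isHomogeneous_C (Fin 2) μ).mul (isHomogeneous_X R 1))).pow M)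

theorem coeff_aeval_homogenize {R A : Type*} [CommSemiring R] [CommSemiring A] [Algebra R A]
    (G : R[X]) (M : ℕ) {U V : A[X]} {d : ℕ} (hU : U.natDegree ≤ d) (hV : V.natDegree ≤ d) :
    (aeval ![U, V] (G.homogenize M)).coeff (M * d) =
      aeval ![U.coeff d, V.coeff d] (G.homogenize M) := by
  rw [aeval_homogenize, aeval_homogenize, Polynomial.finsetSum_coeff]
  refine sum_congr rfl fun kl hkl => ?_
  rw [IsScalarTower.algebraMap_apply R A A[X], Polynomial.algebraMap_eq, Polynomial.coeff_C_mul,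
    ← mem_antidiagonal.1 hkl, add_mul, Polynomial.coeff_mul_add_eq_of_natDegree_le
      (Polynomial.natDegree_pow_le_of_le _ hU) (Polynomial.natDegree_pow_le_of_le _ hV),
    Polynomial.coeff_pow_of_natDegree_le hU, Polynomial.coeff_pow_of_natDegree_le hV]

theorem isUnit_of_aeval_eq_zero {K R : Type*} [Field K] [CommRing R] [Algebra K R] {G : K[X]}
    (h0 : G.coeff 0 ≠ 0) {t : R} (ht : Polynomial.aeval t G = 0) : IsUnit t := by
  have hG : Polynomial.aeval t G.divX * t = -algebraMap K R (G.coeff 0) := by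
    rw [← Polynomial.divX_mul_X_add G] at ht
    simpa [eq_neg_iff_add_eq_zero] using ht
  refine isUnit_of_dvd_unit ⟨_, (hG.symm.trans (mul_comm _ _))⟩ ?_
  exact ((isUnit_iff_ne_zero.2 h0).map (algebraMap K R)).neg

/- A ratio of polynomials that is algebraic over `K` is integral, hence a polynomial; if moreover
its inverse is integral, it is a constant. -/
theorem exists_eq_C_mul_of_aeval_homogenize_eq_zero {K σ : Type*} [Field K] {G : K[X]} {M : ℕ}
    (hM : G.natDegree ≤ M) (h0 : G.coeff 0 ≠ 0) {u v : MvPolynomial σ K} (hv : v ≠ 0)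
    (h : aeval ![u, v] (G.homogenize M) = 0) : ∃ μ, u = C μ * v := by
  let L := FractionRing (MvPolynomial σ K)
  let ι := IsScalarTower.toAlgHom K (MvPolynomial σ K) L
  have hι : Function.Injective ι := IsFractionRing.injective _ L
  have hιv : ι v ≠ 0 := (map_ne_zero_iff ι hι).2 hv
  have hratio : Polynomial.aeval (ι u / ι v) G = 0 := by
    refine (mul_eq_zero_iff_right (pow_ne_zero M hιv)).1 ?_
    rw [← aeval_homogenize_mul_self hM, div_mul_cancel₀ _ hιv, ← algHom_aeval_pair, h, map_zero]
  have hint : IsIntegral (MvPolynomial σ K) (ι u / ι v) :=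
    (IsAlgebraic.isIntegral ⟨G, by rintro rfl; exact h0 rfl, hratio⟩).tower_top
  obtain ⟨t, ht⟩ := IsIntegrallyClosed.isIntegral_iff.1 hint
  have htG : Polynomial.aeval t G = 0 := by
    apply hι
    rw [← Polynomial.aeval_algHom_apply, map_zero, ← hratio, ← ht]
    rfl
  obtain ⟨μ, -, rfl⟩ := isUnit_iff_eq_C_of_isReduced.1 (isUnit_of_aeval_eq_zero h0 htG)
  refine ⟨μ, hι ?_⟩
  rw [map_mul, ← div_eq_iff hιv]
  exact ht.symm

end BinaryForms

section KernelForms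

open scoped Polynomial

variable {K R σ : Type*} [Field K] [CharZero K] [CommRing R] [Algebra K R]

theorem IsLocallyNilpotent.aeval_homogenize_coeff_exp_eq_zero {D : Derivation K R R}
    (hD : IsLocallyNilpotent D) {G : K[X]} {M d : ℕ} {u v : R}
    (hu : (hD.exp u).natDegree ≤ d) (hv : (hD.exp v).natDegree ≤ d) (hMd : 0 < M * d)
    (h : D (aeval ![u, v] (G.homogenize M)) = 0) :
    aeval ![(hD.exp u).coeff d, (hD.exp v).coeff d] (G.homogenize M) = 0 := by
  rw [← coeff_aeval_homogenize G M hu hv, ← algHom_aeval_pair, hD.exp_of_apply_eq_zero h,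
    Polynomial.coeff_C_of_ne_zero hMd.ne']

/- The top coefficients `U` and `V` of `exp u` and `exp v` satisfy every form of positive degree
that vanishes under `D`, so `μ` is the ratio `U / V`. -/
theorem IsLocallyNilpotent.exists_forall_isRoot
    {D : Derivation K (MvPolynomial σ K) (MvPolynomial σ K)} (hD : IsLocallyNilpotent D)
    {u v : MvPolynomial σ K} (huv : D u ≠ 0 ∨ D v ≠ 0) {G : K[X]} (h0 : G.coeff 0 ≠ 0)
    (hdeg : 0 < G.natDegree) (hG : D (aeval ![u, v] (G.homogenize G.natDegree)) = 0) :
    ∃ μ, ∀ H : K[X], 0 < H.natDegree → D (aeval ![u, v] (H.homogenize H.natDegree)) = 0 →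
      H.IsRoot μ := by
  set d := max (hD.exp u).natDegree (hD.exp v).natDegree with hd
  have hud : (hD.exp u).natDegree ≤ d := le_max_left _ _
  have hvd : (hD.exp v).natDegree ≤ d := le_max_right _ _
  have hdpos : 0 < d := by
    rw [hd, lt_max_iff, Nat.pos_iff_ne_zero, Nat.pos_iff_ne_zero]
    exact huv.imp (mt hD.natDegree_exp_eq_zero_iff.1) (mt hD.natDegree_exp_eq_zero_iff.1)
  set U := (hD.exp u).coeff d
  set V := (hD.exp v).coeff d
  have htop (H : K[X]) (hH : 0 < H.natDegree)
      (hker : D (aeval ![u, v] (H.homogenize H.natDegree)) = 0) :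
      aeval ![U, V] (H.homogenize H.natDegree) = 0 :=
    hD.aeval_homogenize_coeff_exp_eq_zero hud hvd (mul_pos hH hdpos) hker
  have hUV : U ≠ 0 ∨ V ≠ 0 := by
    have coeff_ne_zero {p : (MvPolynomial σ K)[X]} (hp : d = p.natDegree) : p.coeff d ≠ 0 :=
      Polynomial.coeff_ne_zero_of_eq_degree
        ((Polynomial.degree_eq_iff_natDegree_eq_of_pos hdpos).2 hp.symm)
    rcases max_choice (hD.exp u).natDegree (hD.exp v).natDegree with h | h
    · exact .inl (coeff_ne_zero h)
    · exact .inr (coeff_ne_zero h)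
  have hV : V ≠ 0 := by
    intro hV
    have hU := htop G hdeg hG
    rw [hV, aeval_homogenize_natDegree_zero_right] at hU
    have hlead : algebraMap K (MvPolynomial σ K) G.leadingCoeff ≠ 0 := by
      rw [map_ne_zero, Polynomial.leadingCoeff_ne_zero]
      rintro rfl
      exact h0 rfl
    exact hUV.elim (pow_ne_zero _ · ((mul_eq_zero_iff_left hlead).1 hU)) (absurd hV)
  obtain ⟨μ, hμ⟩ := exists_eq_C_mul_of_aeval_homogenize_eq_zero le_rfl h0 hV (htop G hdeg hG)
  refine ⟨μ, fun H hH hker => ?_⟩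
  have hroot := htop H hH hker
  rwa [hμ, aeval_homogenize_mul_self le_rfl, mul_eq_zero_iff_right (pow_ne_zero _ hV),
    aeval_C_eq_zero_iff] at hroot

/- Dividing `G` by all its factors `X - μ` leaves a form that `D` still kills, the kernel of `D`
being factorially closed, but that does not vanish at the common root `μ`: it is constant. -/
theorem IsLocallyNilpotent.eq_C_mul_X_sub_C_pow
    {D : Derivation K (MvPolynomial σ K) (MvPolynomial σ K)} (hD : IsLocallyNilpotent D)
    {u v : MvPolynomial σ K} (huv : D u ≠ 0 ∨ D v ≠ 0) {G : K[X]} (h0 : G.coeff 0 ≠ 0)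
    (hdeg : 0 < G.natDegree) (hne : aeval ![u, v] (G.homogenize G.natDegree) ≠ 0)
    (hG : D (aeval ![u, v] (G.homogenize G.natDegree)) = 0) :
    ∃ c μ, G = Polynomial.C c * (Polynomial.X - Polynomial.C μ) ^ G.natDegree := by
  obtain ⟨μ, hμ⟩ := hD.exists_forall_isRoot huv h0 hdeg hG
  have hG0 : G ≠ 0 := by rintro rfl; exact h0 rfl
  obtain ⟨H, hH, hndvd⟩ := G.exists_eq_pow_rootMultiplicity_mul_and_not_dvd hG0 μ
  have hHdeg : H.natDegree = 0 := by
    by_contra hpos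
    refine hndvd (Polynomial.dvd_iff_isRoot.2 (hμ H (Nat.pos_of_ne_zero hpos) ?_))
    refine hD.apply_eq_zero_of_dvd (map_dvd _ ?_) hne hG
    exact Polynomial.homogenize_dvd ⟨_, hH.trans (mul_comm _ _)⟩
  have hmult : G.natDegree = G.rootMultiplicity μ := by
    conv_lhs => rw [hH]
    rw [Polynomial.natDegree_mul (pow_ne_zero _ (Polynomial.X_sub_C_ne_zero μ))
      (by rintro rfl; exact hndvd (dvd_zero _)), Polynomial.natDegree_pow,
      Polynomial.natDegree_X_sub_C, mul_one, hHdeg, add_zero]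
  refine ⟨H.coeff 0, μ, ?_⟩
  rwa [← Polynomial.eq_C_of_natDegree_eq_zero hHdeg, mul_comm, hmult]

end KernelForms

section WeightSupported

open scoped Pointwise

/-- The polynomials all of whose monomials have `w`-weight in `T`. The cases `T = {N}`, `Set.Iic N`
and `Set.Iio N` are the weighted homogeneous polynomials of weight `N` and the two associated
filtrations. -/
noncomputable def weightSupported {σ M : Type*} (R : Type*) [CommSemiring R] [AddCommMonoid M]
    (w : σ → M) (T : Set M) : Submodule R (MvPolynomial σ R) :=
  restrictSupport R (Finsupp.weight w ⁻¹' T)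

variable {σ R M : Type*} [CommSemiring R] [AddCommMonoid M] {w : σ → M} {S T : Set M}
  {f g : MvPolynomial σ R}

theorem mem_weightSupported_iff :
    f ∈ weightSupported R w T ↔ ∀ m, coeff m f ≠ 0 → Finsupp.weight w m ∈ T := by
  simp [weightSupported, mem_restrictSupport_iff, Set.subset_def]

theorem weightSupported_mono (h : S ⊆ T) : weightSupported R w S ≤ weightSupported R w T :=
  restrictSupport_mono R (Set.preimage_mono h)

theorem eq_zero_of_mem_weightSupported_of_disjoint (h : Disjoint S T)
    (hS : f ∈ weightSupported R w S) (hT : f ∈ weightSupported R w T) : f = 0 := by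
  ext m
  by_contra hm
  exact Set.disjoint_left.1 h (mem_weightSupported_iff.1 hS m hm)
    (mem_weightSupported_iff.1 hT m hm)

theorem monomial_mem_weightSupported {m : σ →₀ ℕ} (hm : Finsupp.weight w m ∈ T) (r : R) :
    monomial m r ∈ weightSupported R w T :=
  (monomial_mem_restrictSupport R).2 (.inl hm)

theorem C_mem_weightSupported (h : 0 ∈ T) (r : R) : C r ∈ weightSupported R w T :=
  monomial_mem_weightSupported (by simpa using h) r

theorem X_mem_weightSupported {i : σ} (h : w i ∈ T) : X i ∈ weightSupported R w T :=
  monomial_mem_weightSupported (by simpa [Finsupp.weight_single] using h) 1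

theorem mul_mem_weightSupported (hf : f ∈ weightSupported R w S)
    (hg : g ∈ weightSupported R w T) : f * g ∈ weightSupported R w (S + T) := by
  have hfg := Submodule.mul_mem_mul hf hg
  rw [weightSupported, weightSupported, ← restrictSupport_add] at hfg
  refine restrictSupport_mono R ?_ hfg
  rintro _ ⟨m, hm, n, hn, rfl⟩
  exact ⟨_, hm, _, hn, (map_add _ _ _).symm⟩

theorem pderiv_mem_weightSupported (hf : f ∈ weightSupported R w T) (i : σ) :
    pderiv i f ∈ weightSupported R w {k | k + w i ∈ T} := by
  rw [mem_weightSupported_iff] at hf ⊢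
  intro m hm
  rw [coeff_pderiv] at hm
  simpa [Finsupp.weight_single] using hf _ (left_ne_zero_of_mul hm)

theorem weightedHomogeneousComponent_mem_weightSupported (k : M) :
    weightedHomogeneousComponent w k f ∈ weightSupported R w {k} := by
  classical
  rw [mem_weightSupported_iff]
  intro m hm
  rw [coeff_weightedHomogeneousComponent, ite_ne_right_iff] at hm
  exact hm.1

theorem sub_weightedHomogeneousComponent_mem_weightSupported {R : Type*} [CommRing R]
    {f : MvPolynomial σ R} [PartialOrder M] {k : M} (hf : f ∈ weightSupported R w (Set.Iic k)) :
    f - weightedHomogeneousComponent w k f ∈ weightSupported R w (Set.Iio k) := by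
  classical
  rw [mem_weightSupported_iff] at hf ⊢
  intro m hm
  rw [coeff_sub, coeff_weightedHomogeneousComponent] at hm
  split_ifs at hm with h
  · exact absurd (sub_self _) hm
  · exact lt_of_le_of_ne (hf m (sub_zero (coeff m f) ▸ hm)) h

theorem weight_eq_mul_add_weight_erase {w : σ → ℕ} (i : σ) (m : σ →₀ ℕ) :
    Finsupp.weight w m = m i * w i + Finsupp.weight w (m.erase i) := by
  conv_lhs => rw [← Finsupp.single_add_erase i m, map_add, Finsupp.weight_single, smul_eq_mul]

theorem degreeOf_lt_of_mem_weightSupported {w : σ → ℕ} {i : σ} {d : ℕ} (hd : 0 < d)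
    (hf : f ∈ weightSupported R w (Set.Iio (d * w i))) : degreeOf i f < d := by
  rw [degreeOf_lt_iff hd]
  intro m hm
  have h := mem_weightSupported_iff.1 hf m (mem_support_iff.1 hm)
  rw [Set.mem_Iio, weight_eq_mul_add_weight_erase i] at h
  exact lt_of_mul_lt_mul_right ((Nat.le_add_right _ _).trans_lt h) (Nat.zero_le _)

theorem exists_coeff_ne_zero_eq_degreeOf (hf : f ≠ 0) (i : σ) :
    ∃ m, coeff m f ≠ 0 ∧ m i = degreeOf i f := by
  obtain ⟨m, hm, h⟩ := Finset.exists_mem_eq_sup f.support (support_nonempty.2 hf) fun m => m i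
  exact ⟨m, mem_support_iff.1 hm, by rw [degreeOf_eq_sup, h]⟩

theorem coeff_single_degreeOf_ne_zero {w : σ → ℕ} {i : σ} (hw : ∀ j ≠ i, w j ≠ 0) (hf0 : f ≠ 0)
    (hf : f ∈ weightSupported R w (Set.Iic (degreeOf i f * w i))) :
    coeff (Finsupp.single i (degreeOf i f)) f ≠ 0 := by
  obtain ⟨m, hm, hmi⟩ := exists_coeff_ne_zero_eq_degreeOf hf0 i
  have hle := mem_weightSupported_iff.1 hf m hm
  rw [Set.mem_Iic, weight_eq_mul_add_weight_erase i, hmi, add_le_iff_nonpos_right] at hle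
  have herase : m.erase i = 0 := by
    ext j
    rcases eq_or_ne j i with rfl | hj
    · exact Finsupp.erase_same
    · exact Nat.le_zero.1 ((Finsupp.le_weight w (hw j hj) _).trans hle)
  rw [← Finsupp.single_add_erase i m, herase, add_zero, hmi] at hm
  exact hm

variable {N : Type*} [AddCommMonoid N] [PartialOrder N] [IsOrderedAddMonoid N]

theorem pow_mem_weightSupported_Iic {w : σ → N} {a : N} (hf : f ∈ weightSupported R w (Set.Iic a))
    (n : ℕ) : f ^ n ∈ weightSupported R w (Set.Iic (n • a)) := by
  induction n with
  | zero =>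
    rw [pow_zero, zero_nsmul, ← C_1]
    exact C_mem_weightSupported Set.self_mem_Iic 1
  | succ n ih =>
    rw [pow_succ, succ_nsmul]
    exact weightSupported_mono (Set.Iic_add_Iic_subset _ _) (mul_mem_weightSupported ih hf)

theorem aeval_mem_weightSupported_of_isLowerSet {τ : Type*} {w : σ → N} {w' : τ → N}
    {g : σ → MvPolynomial τ R} (hg : ∀ i, g i ∈ weightSupported R w' (Set.Iic (w i))) {T : Set N}
    (hT : IsLowerSet T) (hf : f ∈ weightSupported R w T) : aeval g f ∈ weightSupported R w' T := by
  have hprod (m : σ →₀ ℕ) :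
      (m.prod fun i k => g i ^ k) ∈ weightSupported R w' (Set.Iic (Finsupp.weight w m)) := by
    induction m using Finsupp.induction_linear with
    | zero =>
      rw [Finsupp.prod_zero_index, map_zero, ← C_1]
      exact C_mem_weightSupported Set.self_mem_Iic 1
    | add m n hm hn =>
      classical
      rw [Finsupp.prod_add_index' (fun _ => pow_zero _) (fun _ => pow_add _), map_add]
      exact weightSupported_mono (Set.Iic_add_Iic_subset _ _) (mul_mem_weightSupported hm hn)
    | single i k =>
      rw [Finsupp.prod_single_index (h := fun i k => g i ^ k) (pow_zero _),
        Finsupp.weight_single]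
      exact pow_mem_weightSupported_Iic (hg i) k
  rw [f.as_sum, map_sum]
  refine sum_mem fun m hm => ?_
  rw [aeval_monomial, algebraMap_eq, ← smul_eq_C_mul]
  have hmT := mem_weightSupported_iff.1 hf m (mem_support_iff.1 hm)
  exact Submodule.smul_mem _ _ (weightSupported_mono (hT.Iic_subset hmT) (hprod m))

end WeightSupported

section Jacobian

open scoped Pointwise

variable {R : Type*} [CommRing R]

/-- The derivation `u ↦ ∂(f, u) / ∂(x, y)` of `R[x, y]`. -/
noncomputable def jacobianDerivation (f : MvPolynomial (Fin 2) R) :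
    Derivation R (MvPolynomial (Fin 2) R) (MvPolynomial (Fin 2) R) :=
  pderiv 0 f • pderiv 1 - pderiv 1 f • pderiv 0

theorem jacobianDerivation_apply (f u : MvPolynomial (Fin 2) R) :
    jacobianDerivation f u = pderiv 0 f * pderiv 1 u - pderiv 1 f * pderiv 0 u :=
  rfl

theorem jacobianDerivation_self (f : MvPolynomial (Fin 2) R) : jacobianDerivation f f = 0 := by
  rw [jacobianDerivation_apply, mul_comm, sub_self]

theorem jacobianDerivation_X_zero (f : MvPolynomial (Fin 2) R) :
    jacobianDerivation f (X 0) = -pderiv 1 f := by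
  simp [jacobianDerivation_apply]

theorem jacobianDerivation_X_one (f : MvPolynomial (Fin 2) R) :
    jacobianDerivation f (X 1) = pderiv 0 f := by
  simp [jacobianDerivation_apply]

theorem pderiv_algHom_apply {S σ τ : Type*} [CommSemiring S] [Fintype σ]
    (φ : MvPolynomial σ S →ₐ[S] MvPolynomial τ S) (i : τ) (u : MvPolynomial σ S) :
    pderiv i (φ u) = ∑ j, φ (pderiv j u) * pderiv i (φ (X j)) := by
  induction u using MvPolynomial.induction_on with
  | C a => simp [← algebraMap_eq]
  | add p q hp hq => simp only [map_add, hp, hq, add_mul, Finset.sum_add_distrib]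
  | mul_X p j hp =>
    classical
    have hX : ∑ k, φ p * φ (pderiv k (X j)) * pderiv i (φ (X k)) =
        φ p * pderiv i (φ (X j)) := by
      rw [Finset.sum_eq_single_of_mem j (Finset.mem_univ j) fun k _ hk => by
        rw [pderiv_X_of_ne hk.symm, map_zero, mul_zero, zero_mul]]
      rw [pderiv_X_self, map_one, mul_one]
    simp only [pderiv_mul, map_add, add_mul, Finset.sum_add_distrib, map_mul, hp, hX,
      Finset.sum_mul, mul_right_comm _ (φ (X j))]

theorem jacobianDerivation_algHom_apply
    (φ : MvPolynomial (Fin 2) R →ₐ[R] MvPolynomial (Fin 2) R) (u v : MvPolynomial (Fin 2) R) :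
    jacobianDerivation (φ u) (φ v) =
      φ (jacobianDerivation u v) * jacobianDerivation (φ (X 0)) (φ (X 1)) := by
  simp only [jacobianDerivation_apply, pderiv_algHom_apply φ _ u, pderiv_algHom_apply φ _ v,
    Fin.sum_univ_two, map_sub, map_mul]
  ring

theorem isUnit_jacobianDerivation_algEquiv
    (φ : MvPolynomial (Fin 2) R ≃ₐ[R] MvPolynomial (Fin 2) R) :
    IsUnit (jacobianDerivation (φ (X 0)) (φ (X 1))) := by
  have h : jacobianDerivation (φ (φ.symm (X 0))) (φ (φ.symm (X 1))) =
      φ (jacobianDerivation (φ.symm (X 0)) (φ.symm (X 1))) *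
        jacobianDerivation (φ (X 0)) (φ (X 1)) :=
    jacobianDerivation_algHom_apply φ.toAlgHom _ _
  rw [φ.apply_symm_apply, φ.apply_symm_apply, jacobianDerivation_X_one, pderiv_X_self] at h
  exact IsUnit.of_mul_eq_one_right _ h.symm

/- In the coordinates `φ x, φ y` this derivation is a constant multiple of `∂ / ∂(φ y)`. -/
theorem isLocallyNilpotent_jacobianDerivation_algEquiv [IsReduced R]
    (φ : MvPolynomial (Fin 2) R ≃ₐ[R] MvPolynomial (Fin 2) R) :
    IsLocallyNilpotent (jacobianDerivation (φ (X 0))) := by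
  obtain ⟨c, -, hc⟩ := isUnit_iff_eq_C_of_isReduced.1 (isUnit_jacobianDerivation_algEquiv φ)
  have hgen : Algebra.adjoin R (Set.range (φ ∘ X)) = ⊤ := by
    rw [Set.range_comp]
    exact ((φ.toAlgHom.map_adjoin _).symm.trans (by rw [adjoin_range_X])).trans
      (Algebra.map_top _ |>.trans <| (AlgHom.range_eq_top _).2 φ.surjective)
  refine .of_adjoin_eq_top hgen ?_
  rintro _ ⟨i, rfl⟩
  fin_cases i
  · exact ⟨1, jacobianDerivation_self _⟩
  · refine ⟨2, ?_⟩
    change jacobianDerivation _ (jacobianDerivation _ (φ (X 1))) = 0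
    rw [hc, derivation_C]

theorem jacobianDerivation_mem_weightSupported {M : Type*} [AddCommMonoid M] {w : Fin 2 → M}
    {S T : Set M} {f g : MvPolynomial (Fin 2) R}
    (hf : f ∈ weightSupported R w S) (hg : g ∈ weightSupported R w T) :
    jacobianDerivation f g ∈ weightSupported R w {k | k + (w 0 + w 1) ∈ S + T} := by
  rw [jacobianDerivation_apply]
  refine sub_mem
    (weightSupported_mono ?_ (mul_mem_weightSupported (pderiv_mem_weightSupported hf 0)
      (pderiv_mem_weightSupported hg 1)))
    (weightSupported_mono ?_ (mul_mem_weightSupported (pderiv_mem_weightSupported hf 1)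
      (pderiv_mem_weightSupported hg 0)))
  · rintro _ ⟨a, ha, b, hb, rfl⟩
    exact ⟨_, ha, _, hb, add_add_add_comm _ _ _ _⟩
  · rintro _ ⟨a, ha, b, hb, rfl⟩
    refine ⟨_, ha, _, hb, ?_⟩
    rw [add_comm (w 0)]
    exact add_add_add_comm _ _ _ _

theorem iterate_jacobianDerivation_mem_weightSupported {w : Fin 2 → ℕ} {N k : ℕ}
    {F u : MvPolynomial (Fin 2) R} (hF : F ∈ weightSupported R w {N})
    (hu : u ∈ weightSupported R w {k}) (n : ℕ) :
    (jacobianDerivation F)^[n] u ∈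
      weightSupported R w {j | j + n * (w 0 + w 1) = k + n * N} := by
  induction n with
  | zero => simpa using hu
  | succ n ih =>
    rw [Function.iterate_succ_apply']
    refine weightSupported_mono ?_ (jacobianDerivation_mem_weightSupported hF ih)
    rintro j ⟨_, rfl, t, ht, hj⟩
    simp only [Set.mem_ofPred_eq] at ht hj ⊢
    linarith

theorem iterate_jacobianDerivation_sub_mem_weightSupported {w : Fin 2 → ℕ} {N k : ℕ}
    {f F u : MvPolynomial (Fin 2) R} (hF : F ∈ weightSupported R w {N})
    (hf : f - F ∈ weightSupported R w (Set.Iio N)) (hu : u ∈ weightSupported R w {k}) (n : ℕ) :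
    (jacobianDerivation f)^[n] u - (jacobianDerivation F)^[n] u ∈
      weightSupported R w {j | j + n * (w 0 + w 1) < k + n * N} := by
  induction n with
  | zero => simp
  | succ n ih =>
    have hsub : jacobianDerivation (f - F) = jacobianDerivation f - jacobianDerivation F := by
      ext i
      simp only [jacobianDerivation_apply, map_sub, Derivation.sub_apply]
      ring_nf
    have hle : (jacobianDerivation f)^[n] u ∈
        weightSupported R w {j | j + n * (w 0 + w 1) ≤ k + n * N} := by
      rw [← sub_add_cancel ((jacobianDerivation f)^[n] u) ((jacobianDerivation F)^[n] u)]
      refine add_mem (weightSupported_mono ?_ ih) (weightSupported_mono ?_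
        (iterate_jacobianDerivation_mem_weightSupported hF hu n))
      · exact fun j (hj : j + n * (w 0 + w 1) < k + n * N) => hj.le
      · exact fun j (hj : j + n * (w 0 + w 1) = k + n * N) => hj.le
    rw [Function.iterate_succ_apply', Function.iterate_succ_apply',
      ← sub_add_sub_cancel _ (jacobianDerivation F ((jacobianDerivation f)^[n] u)), ← map_sub,
      ← Derivation.sub_apply, ← hsub]
    refine add_mem
      (weightSupported_mono ?_ (jacobianDerivation_mem_weightSupported hf hle))
      (weightSupported_mono ?_ (jacobianDerivation_mem_weightSupported hF ih))
    · rintro j ⟨s, hs, t, ht, hj⟩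
      simp only [Set.mem_Iio, Set.mem_ofPred_eq] at hs ht hj ⊢
      linarith
    · rintro j ⟨_, rfl, t, ht, hj⟩
      simp only [Set.mem_ofPred_eq] at ht hj ⊢
      linarith

theorem IsLocallyNilpotent.jacobianDerivation_of_sub_mem {w : Fin 2 → ℕ} {N : ℕ}
    {f F : MvPolynomial (Fin 2) R} (hf : IsLocallyNilpotent (jacobianDerivation f))
    (hF : F ∈ weightSupported R w {N}) (hfF : f - F ∈ weightSupported R w (Set.Iio N)) :
    IsLocallyNilpotent (jacobianDerivation F) := by
  refine .of_adjoin_eq_top adjoin_range_X ?_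
  rintro _ ⟨i, rfl⟩
  obtain ⟨n, hn⟩ := hf (X i)
  have hX : X i ∈ weightSupported R w {w i} := X_mem_weightSupported rfl
  have hlt := iterate_jacobianDerivation_sub_mem_weightSupported hF hfF hX n
  rw [hn, zero_sub, neg_mem_iff] at hlt
  refine ⟨n, eq_zero_of_mem_weightSupported_of_disjoint ?_
    (iterate_jacobianDerivation_mem_weightSupported hF hX n) hlt⟩
  exact Set.disjoint_left.2 fun j hj hj' => hj'.ne hj

theorem IsLocallyNilpotent.jacobianDerivation_weightedHomogeneousComponent {w : Fin 2 → ℕ} {N : ℕ}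
    {f : MvPolynomial (Fin 2) R} (hf : IsLocallyNilpotent (jacobianDerivation f))
    (hfN : f ∈ weightSupported R w (Set.Iic N)) :
    IsLocallyNilpotent (jacobianDerivation (weightedHomogeneousComponent w N f)) :=
  hf.jacobianDerivation_of_sub_mem (weightedHomogeneousComponent_mem_weightSupported N)
    (sub_weightedHomogeneousComponent_mem_weightSupported hfN)

end Jacobian

section NewtonTriangle

open scoped Polynomial

theorem notMem_vars_of_pderiv_eq_zero {R σ : Type*} [CommSemiring R] [NoZeroDivisors R]
    [CharZero R] {f : MvPolynomial σ R} {i : σ} (h : pderiv i f = 0) : i ∉ f.vars := by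
  rw [mem_vars_iff_mem_support]
  rintro ⟨m, hm, hi⟩
  have hm' : m - Finsupp.single i 1 + Finsupp.single i 1 = m :=
    tsub_add_cancel_of_le <| Finsupp.single_le_iff.2 <| Nat.pos_of_ne_zero <|
      Finsupp.mem_support_iff.1 hi
  have hcoeff := coeff_pderiv (i := i) f (m - Finsupp.single i 1)
  rw [h, coeff_zero, hm'] at hcoeff
  exact mul_ne_zero (mem_support_iff.1 hm) (Nat.cast_add_one_ne_zero _) hcoeff.symm

theorem pderiv_ne_zero_of_coeff_ne_zero {R σ : Type*} [CommSemiring R] [NoZeroDivisors R]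
    [CharZero R] {f : MvPolynomial σ R} {i : σ} {m : σ →₀ ℕ} (hm : coeff m f ≠ 0) (hi : m i ≠ 0) :
    pderiv i f ≠ 0 := fun h =>
  notMem_vars_of_pderiv_eq_zero h <|
    mem_vars_iff_mem_support i |>.2 ⟨m, mem_support_iff.2 hm, Finsupp.mem_support_iff.2 hi⟩

theorem X_dvd_of_forall_coeff_ne_zero {R σ : Type*} [CommSemiring R] {f : MvPolynomial σ R} {i : σ}
    (h : ∀ m, coeff m f ≠ 0 → m i ≠ 0) : X i ∣ f := by
  rw [f.as_sum]
  exact Finset.dvd_sum fun m hm => X_dvd_monomial.2 (.inr (h m (mem_support_iff.1 hm)))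

variable {K : Type*} [Field K] [CharZero K] {f F : MvPolynomial (Fin 2) K}

/- Otherwise the leading form of `f` is divisible by both variables, which its locally nilpotent
Jacobian derivation must then annihilate. -/
theorem IsLocallyNilpotent.mem_weightSupported_Iic_degreeOf_mul
    (hf : IsLocallyNilpotent (jacobianDerivation f)) {w : Fin 2 → ℕ}
    (hw : degreeOf 0 f * w 0 = degreeOf 1 f * w 1) :
    f ∈ weightSupported K w (Set.Iic (degreeOf 0 f * w 0)) := by
  have hle : f ∈ weightSupported K w (Set.Iic (weightedTotalDegree w f)) :=
    mem_weightSupported_iff.2 fun m hm => le_weightedTotalDegree w (mem_support_iff.2 hm)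
  refine weightSupported_mono (Set.Iic_subset_Iic.2 (le_of_not_gt fun hlt => ?_)) hle
  have hcoeff (m) (hm : coeff m (weightedHomogeneousComponent w (weightedTotalDegree w f) f) ≠ 0) :
      m 0 ≠ 0 ∧ m 1 ≠ 0 := by
    classical
    rw [coeff_weightedHomogeneousComponent, ite_ne_right_iff] at hm
    have h0 := monomial_le_degreeOf 0 (mem_support_iff.2 hm.2)
    have h1 := monomial_le_degreeOf 1 (mem_support_iff.2 hm.2)
    rw [Finsupp.weight_eq_sum, Fin.sum_univ_two, smul_eq_mul, smul_eq_mul] at hm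
    constructor <;> intro h <;> nlinarith
  have hf0 : f ≠ 0 := by
    rintro rfl
    simp [weightedTotalDegree_zero] at hlt
  obtain ⟨m, hm, hmw⟩ :=
    Finset.exists_mem_eq_sup f.support (support_nonempty.2 hf0) (Finsupp.weight w)
  change weightedTotalDegree w f = _ at hmw
  have hFm : coeff m (weightedHomogeneousComponent w (weightedTotalDegree w f) f) ≠ 0 := by
    classical
    rw [coeff_weightedHomogeneousComponent, if_pos hmw.symm]
    exact mem_support_iff.1 hm
  have hF0 : weightedHomogeneousComponent w (weightedTotalDegree w f) f ≠ 0 :=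
    ne_zero_iff.2 ⟨m, hFm⟩
  have hX := (hf.jacobianDerivation_weightedHomogeneousComponent hle).apply_eq_zero_of_dvd
    (X_dvd_of_forall_coeff_ne_zero fun m hm => (hcoeff m hm).2) hF0 (jacobianDerivation_self _)
  rw [jacobianDerivation_X_one] at hX
  exact pderiv_ne_zero_of_coeff_ne_zero hFm (hcoeff m hFm).1 hX

theorem exists_add_eq_of_mul_add_mul_eq_mul {p q M a b : ℕ} (hp : p ≠ 0) (hq : q ≠ 0)
    (hpq : p.Coprime q) (h : a * q + b * p = p * M * q) :
    ∃ k l, k + l = M ∧ a = p * l ∧ b = q * k := by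
  obtain ⟨k, rfl⟩ : q ∣ b := hpq.symm.dvd_of_dvd_mul_right <|
    (Nat.dvd_add_right (Dvd.intro_left a rfl)).1 (h ▸ Dvd.intro_left _ rfl)
  obtain ⟨l, rfl⟩ : p ∣ a := hpq.dvd_of_dvd_mul_right <|
    (Nat.dvd_add_left (Dvd.intro_left _ rfl)).1 (h ▸ (mul_assoc p M q).symm ▸ Dvd.intro _ rfl)
  refine ⟨k, l, ?_, rfl, rfl⟩
  refine Nat.eq_of_mul_eq_mul_left (Nat.pos_of_ne_zero (mul_ne_zero hp hq)) ?_
  linarith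

theorem exists_eq_aeval_homogenize_of_mem_weightSupported {R : Type*} [CommSemiring R] {p q M : ℕ}
    (hp : p ≠ 0) (hq : q ≠ 0) (hpq : p.Coprime q) {F : MvPolynomial (Fin 2) R}
    (hF : F ∈ weightSupported R ![q, p] {p * M * q}) :
    ∃ G : R[X], G.natDegree ≤ M ∧ G.coeff 0 = coeff (Finsupp.single 0 (p * M)) F ∧
      G.coeff M = coeff (Finsupp.single 1 (q * M)) F ∧
      F = aeval ![X 1 ^ q, X 0 ^ p] (G.homogenize M) := by
  classical
  let e (kl : ℕ × ℕ) : Fin 2 →₀ ℕ := Finsupp.single 0 (p * kl.2) + Finsupp.single 1 (q * kl.1)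
  have he0 (kl) : e kl 0 = p * kl.2 := by simp [e]
  have he1 (kl) : e kl 1 = q * kl.1 := by simp [e]
  have he : Function.Injective e := fun kl kl' h => Prod.ext
    (Nat.eq_of_mul_eq_mul_left (Nat.pos_of_ne_zero hq) (he1 kl ▸ he1 kl' ▸ DFunLike.congr_fun h 1))
    (Nat.eq_of_mul_eq_mul_left (Nat.pos_of_ne_zero hp) (he0 kl ▸ he0 kl' ▸ DFunLike.congr_fun h 0))
  have hsupp : F.support ⊆ (Finset.HasAntidiagonal.antidiagonal M).image e := by
    intro m hm
    have hw := mem_weightSupported_iff.1 hF m (mem_support_iff.1 hm)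
    rw [Finsupp.weight_eq_sum, Fin.sum_univ_two] at hw
    obtain ⟨k, l, hkl, h0, h1⟩ := exists_add_eq_of_mul_add_mul_eq_mul hp hq hpq hw
    refine Finset.mem_image.2 ⟨(k, l), Finset.HasAntidiagonal.mem_antidiagonal.2 hkl, ?_⟩
    ext i
    fin_cases i
    · exact (he0 _).trans h0.symm
    · exact (he1 _).trans h1.symm
  let G : R[X] := Polynomial.ofFn (M + 1) fun k => coeff (e (k, M - k)) F
  have hG {k : ℕ} (hk : k ≤ M) : G.coeff k = coeff (e (k, M - k)) F :=
    Polynomial.ofFn_coeff_eq_val_of_lt _ (Nat.lt_succ_of_le hk)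
  refine ⟨G, Nat.le_of_lt_succ (Polynomial.ofFn_natDegree_lt (Nat.succ_pos M) _), ?_, ?_, ?_⟩
  · simp [hG (Nat.zero_le M), e]
  · simp [hG le_rfl, e]
  · rw [aeval_homogenize]
    conv_lhs => rw [← support_sum_monomial_coeff F]
    rw [Finset.sum_subset hsupp fun m _ hm => by rw [notMem_support_iff.1 hm, monomial_zero],
      Finset.sum_image he.injOn]
    refine Finset.sum_congr rfl fun kl hkl => ?_
    obtain ⟨k, l⟩ := kl
    obtain rfl := Finset.HasAntidiagonal.mem_antidiagonal.1 hkl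
    rw [hG (Nat.le_add_right k l), Nat.add_sub_cancel_left, monomial_eq,
      Finsupp.prod_fintype _ _ fun _ => pow_zero _, Fin.prod_univ_two, he0, he1, algebraMap_eq,
      pow_mul, pow_mul, mul_comm (_ ^ k)]

theorem IsLocallyNilpotent.exists_eq_C_mul_sub_pow
    (hF : IsLocallyNilpotent (jacobianDerivation F)) {p q M : ℕ} (hp : p ≠ 0) (hq : q ≠ 0)
    (hM : M ≠ 0) (hpq : p.Coprime q) (hFw : F ∈ weightSupported K ![q, p] {p * M * q})
    (h0 : coeff (Finsupp.single 0 (p * M)) F ≠ 0) (h1 : coeff (Finsupp.single 1 (q * M)) F ≠ 0) :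
    ∃ c μ : K, c ≠ 0 ∧ μ ≠ 0 ∧ F = C c * (X 1 ^ q - C μ * X 0 ^ p) ^ M := by
  obtain ⟨G, hGM, hG0, hG1, hFG⟩ := exists_eq_aeval_homogenize_of_mem_weightSupported hp hq hpq hFw
  replace hGM : G.natDegree = M := Polynomial.natDegree_eq_of_le_of_coeff_ne_zero hGM (hG1 ▸ h1)
  have hX : jacobianDerivation F (X 1 ^ q) ≠ 0 := fun h => by
    have hX1 := hF.apply_eq_zero_of_dvd (dvd_pow_self _ hq) (pow_ne_zero q (X_ne_zero 1)) h
    rw [jacobianDerivation_X_one] at hX1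
    refine pderiv_ne_zero_of_coeff_ne_zero h0 ?_ hX1
    rw [Finsupp.single_eq_same]
    exact mul_ne_zero hp hM
  obtain ⟨c, μ, hG⟩ := hF.eq_C_mul_X_sub_C_pow (.inl hX) (hG0 ▸ h0)
    (Nat.pos_of_ne_zero (hGM ▸ hM)) (v := X 0 ^ p) (by
      rw [hGM, ← hFG]
      exact ne_zero_iff.2 ⟨_, h0⟩) (by rw [hGM, ← hFG, jacobianDerivation_self])
  rw [hGM] at hG
  have hcμ : c * (-μ) ^ M ≠ 0 := by
    rw [← hG0, hG] at h0
    simpa [Polynomial.coeff_zero_eq_eval_zero] using h0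
  refine ⟨c, μ, left_ne_zero_of_mul hcμ, ?_, ?_⟩
  · rintro rfl
    simp [hM] at hcμ
  · rw [hFG, hG, homogenize_C_mul_X_sub_C_pow]
    simp [algebraMap_eq]

theorem IsLocallyNilpotent.eq_one_or_eq_one_of_C_mul_sub_pow {p q M : ℕ} {c μ : K} (hp : p ≠ 0)
    (hq : q ≠ 0) (hM : M ≠ 0) (hc : c ≠ 0) (hμ : μ ≠ 0)
    (hF : IsLocallyNilpotent (jacobianDerivation (C c * (X 1 ^ q - C μ * X 0 ^ p) ^ M))) :
    p = 1 ∨ q = 1 := by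
  set h : MvPolynomial (Fin 2) K := X 1 ^ q - C μ * X 0 ^ p with hh
  set D := jacobianDerivation (C c * h ^ M) with hDdef
  have hh0 : h ≠ 0 := fun h0 => by simpa [hh, hp] using congrArg (eval ![0, 1]) h0
  have hDh : D h = 0 := hF.apply_eq_zero_of_dvd (dvd_mul_of_dvd_right (dvd_pow_self h hM) _)
    (mul_ne_zero (C_ne_zero.2 hc) (pow_ne_zero M hh0)) (jacobianDerivation_self _)
  have hker (k : K) : D (C k * h ^ (M - 1)) = 0 := by
    rw [Derivation.leibniz, Derivation.leibniz_pow, hDh, derivation_C, smul_zero, smul_zero,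
      smul_zero, smul_zero, add_zero]
  have hne {k : K} (hk : k ≠ 0) : C k * h ^ (M - 1) ≠ 0 :=
    mul_ne_zero (C_ne_zero.2 hk) (pow_ne_zero _ hh0)
  have hD0 : D (X 0) = C (-(c * M * q)) * h ^ (M - 1) * X 1 ^ (q - 1) := by
    rw [hDdef, jacobianDerivation_X_zero, pderiv_C_mul, pderiv_pow, hh, map_sub, pderiv_C_mul,
      pderiv_pow, pderiv_pow, pderiv_X_self, pderiv_X_of_ne zero_ne_one]
    simp only [C_neg, C_mul, map_natCast]
    ring
  have hD1 : D (X 1) = C (-(c * M * μ * p)) * h ^ (M - 1) * X 0 ^ (p - 1) := by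
    rw [hDdef, jacobianDerivation_X_one, pderiv_C_mul, pderiv_pow, hh, map_sub, pderiv_C_mul,
      pderiv_pow, pderiv_pow, pderiv_X_self, pderiv_X_of_ne one_ne_zero]
    simp only [C_neg, C_mul, map_natCast]
    ring
  have hpq := hF.eq_zero_or_eq_zero_of_apply_eq_mul_pow hD0 hD1 (hker _) (hker _)
    (hne (by simp [*])) (hne (by simp [*])) (X_ne_zero 0) (X_ne_zero 1)
  omega

theorem IsLocallyNilpotent.exists_sub_C_mul_sub_pow_mem
    (hf : IsLocallyNilpotent (jacobianDerivation f)) (h0 : degreeOf 0 f ≠ 0)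
    (h1 : degreeOf 1 f ≠ 0) :
    ∃ (p q M : ℕ) (c μ : K), (p = 1 ∨ q = 1) ∧ μ ≠ 0 ∧ degreeOf 0 f = p * M ∧
      degreeOf 1 f = q * M ∧ f - C c * (X 1 ^ q - C μ * X 0 ^ p) ^ M ∈
        weightSupported K ![q, p] (Set.Iio (p * M * q)) := by
  obtain ⟨M, p, q, hM, hpq, hp, hq⟩ := Nat.exists_coprime'
    (Nat.gcd_pos_of_pos_left (degreeOf 1 f) (Nat.pos_of_ne_zero h0))
  have hp0 : p ≠ 0 := left_ne_zero_of_mul (hp ▸ h0)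
  have hq0 : q ≠ 0 := left_ne_zero_of_mul (hq ▸ h1)
  have hf0 : f ≠ 0 := by rintro rfl; exact h0 (degreeOf_zero 0)
  have hpos : ∀ i, ![q, p] i ≠ 0 := Fin.forall_fin_two.2 ⟨hq0, hp0⟩
  have hw : degreeOf 0 f * q = degreeOf 1 f * p := by rw [hp, hq]; ring
  have hle := hf.mem_weightSupported_Iic_degreeOf_mul (w := ![q, p]) hw
  have hcorner0 := coeff_single_degreeOf_ne_zero (i := 0) (fun j _ => hpos j) hf0 hle
  have hcorner1 := coeff_single_degreeOf_ne_zero (i := 1) (fun j _ => hpos j) hf0 (hw ▸ hle)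
  rw [hp] at hle hcorner0
  rw [hq] at hcorner1
  change f ∈ weightSupported K ![q, p] (Set.Iic (p * M * q)) at hle
  have hw0 : Finsupp.weight ![q, p] (Finsupp.single 0 (p * M)) = p * M * q :=
    Finsupp.weight_single ..
  have hw1 : Finsupp.weight ![q, p] (Finsupp.single 1 (q * M)) = p * M * q :=
    (Finsupp.weight_single ..).trans (show q * M * p = p * M * q by ring)
  have hF := hf.jacobianDerivation_weightedHomogeneousComponent hle
  obtain ⟨c, μ, hc, hμ, hFeq⟩ := hF.exists_eq_C_mul_sub_pow hp0 hq0 hM.ne' hpq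
    (weightedHomogeneousComponent_mem_weightSupported _)
    (by
      classical
      rw [coeff_weightedHomogeneousComponent, if_pos hw0]
      exact hcorner0)
    (by
      classical
      rw [coeff_weightedHomogeneousComponent, if_pos hw1]
      exact hcorner1)
  have hsub := sub_weightedHomogeneousComponent_mem_weightSupported hle
  rw [hFeq] at hF hsub
  exact ⟨p, q, M, c, μ, hF.eq_one_or_eq_one_of_C_mul_sub_pow hp0 hq0 hM.ne' hc hμ, hμ, hp, hq, hsub⟩

end NewtonTriangle

section Shear

variable {R : Type*} [CommRing R] {n : ℕ} {i : Fin n} {F : MvPolynomial (Fin n) R}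

theorem algHom_eq_self_of_notMem_vars {σ : Type*} {i : σ} {F : MvPolynomial σ R}
    {e : MvPolynomial σ R →ₐ[R] MvPolynomial σ R} (he : ∀ j ≠ i, e (X j) = X j)
    (hF : i ∉ F.vars) : e F = F :=
  hom_congr_vars (f₁ := (e : MvPolynomial σ R →+* MvPolynomial σ R)) (f₂ := RingHom.id _)
    (RingHom.ext fun a => e.commutes a)
    (fun j hj _ => he j <| by rintro rfl; exact hF hj) rfl

theorem algEquiv_C {R σ : Type*} [CommSemiring R] (e : MvPolynomial σ R ≃ₐ[R] MvPolynomial σ R)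
    (a : R) : e (C a) = C a :=
  e.commutes a

/-- The endomorphism `X i ↦ X i + F` fixing all the other variables. -/
noncomputable def shearHom (i : Fin n) (F : MvPolynomial (Fin n) R) :
    MvPolynomial (Fin n) R →ₐ[R] MvPolynomial (Fin n) R :=
  aeval (Function.update X i (X i + F))

theorem shearHom_X_self (i : Fin n) (F : MvPolynomial (Fin n) R) :
    shearHom i F (X i) = X i + F := by
  rw [shearHom, aeval_X, Function.update_self]

theorem shearHom_X_of_ne {j : Fin n} (F : MvPolynomial (Fin n) R) (hj : j ≠ i) :
    shearHom i F (X j) = X j := by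
  rw [shearHom, aeval_X, Function.update_of_ne hj]

theorem shearHom_comp_shearHom_neg (hF : i ∉ F.vars) :
    (shearHom i F).comp (shearHom i (-F)) = AlgHom.id R _ := by
  refine algHom_ext fun j => ?_
  rw [AlgHom.comp_apply, AlgHom.id_apply]
  obtain rfl | hj := eq_or_ne j i
  · rw [shearHom_X_self, map_add, map_neg, shearHom_X_self,
      algHom_eq_self_of_notMem_vars (fun k => shearHom_X_of_ne F) hF, add_neg_cancel_right]
  · rw [shearHom_X_of_ne _ hj, shearHom_X_of_ne _ hj]

/-- The elementary automorphism `X i ↦ X i + F`, where `F` does not involve `X i`. -/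
noncomputable def shear (i : Fin n) (F : MvPolynomial (Fin n) R) (hF : i ∉ F.vars) :
    MvPolynomial (Fin n) R ≃ₐ[R] MvPolynomial (Fin n) R :=
  .ofAlgHom (shearHom i F) (shearHom i (-F)) (shearHom_comp_shearHom_neg hF) <| by
    simpa only [neg_neg] using shearHom_comp_shearHom_neg (F := -F) (by rwa [vars_neg])

theorem shear_X_self (hF : i ∉ F.vars) : shear i F hF (X i) = X i + F :=
  shearHom_X_self i F

theorem shear_X_of_ne {j : Fin n} (hF : i ∉ F.vars) (hj : j ≠ i) : shear i F hF (X j) = X j :=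
  shearHom_X_of_ne F hj

theorem shear_eq_self {G : MvPolynomial (Fin n) R} (hF : i ∉ F.vars) (hG : i ∉ G.vars) :
    shear i F hF G = G :=
  algHom_eq_self_of_notMem_vars (e := (shear i F hF : _ →ₐ[R] _)) (fun _ => shear_X_of_ne hF) hG

theorem isElementary_shear_inv (hF : i ∉ F.vars) : IsElementary (shear i F hF)⁻¹ :=
  ⟨i, -F, by rwa [vars_neg], shearHom_X_self i (-F), fun _ => shearHom_X_of_ne (-F)⟩

theorem IsTame.of_mul {e φ : MvPolynomial (Fin n) R ≃ₐ[R] MvPolynomial (Fin n) R}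
    (he : IsElementary e⁻¹ ∨ IsLinearAut e⁻¹) (h : IsTame (e * φ)) : IsTame φ := by
  obtain ⟨l, hl, hprod⟩ := h
  exact ⟨e⁻¹ :: l, List.forall_mem_cons.2 ⟨he, hl⟩,
    by rw [List.prod_cons, ← hprod, inv_mul_cancel_left]⟩

theorem IsLinearAut.isTame {φ : MvPolynomial (Fin n) R ≃ₐ[R] MvPolynomial (Fin n) R}
    (h : IsLinearAut φ) : IsTame φ :=
  ⟨[φ], List.forall_mem_singleton.2 (.inr h), (List.prod_singleton).symm⟩

theorem IsTame.of_shear_mul {φ : MvPolynomial (Fin n) R ≃ₐ[R] MvPolynomial (Fin n) R}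
    (hF : i ∉ F.vars) (h : IsTame (shear i F hF * φ)) : IsTame φ :=
  .of_mul (.inl (isElementary_shear_inv hF)) h

end Shear

section DegreeReduction

theorem notMem_vars_C_mul {R σ : Type*} [CommSemiring R] {i : σ} {f : MvPolynomial σ R}
    (hf : i ∉ f.vars) (a : R) : i ∉ (C a * f).vars := by
  rw [mem_vars_iff_degreeOf_ne_zero, not_not] at hf ⊢
  exact Nat.le_zero.1 ((degreeOf_C_mul_le f i a).trans hf.le)

theorem notMem_vars_X_pow {R σ : Type*} [CommSemiring R] {i j : σ} (hij : i ≠ j) (k : ℕ) :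
    i ∉ (X j ^ k : MvPolynomial σ R).vars := fun h =>
  mem_vars_iff_degreeOf_ne_zero.1 h (degreeOf_X_pow_of_ne k hij)

theorem shear_mem_weightSupported_Iio {R : Type*} [CommRing R] {n : ℕ} {w : Fin n → ℕ}
    {i : Fin n} {F f : MvPolynomial (Fin n) R} {d : ℕ} (hF : i ∉ F.vars)
    (hFw : F ∈ weightSupported R w (Set.Iic (w i))) (hf : f ∈ weightSupported R w (Set.Iio d)) :
    shear i F hF f ∈ weightSupported R w (Set.Iio d) := by
  refine aeval_mem_weightSupported_of_isLowerSet (fun j => ?_) (isLowerSet_Iio d) hf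
  obtain rfl | hj := eq_or_ne j i
  · rw [Function.update_self]
    exact add_mem (X_mem_weightSupported Set.self_mem_Iic) hFw
  · rw [Function.update_of_ne hj]
    exact X_mem_weightSupported Set.self_mem_Iic

theorem exists_shear_degreeOf_le_and_lt {R : Type*} [CommRing R] [Nontrivial R] {n : ℕ}
    {w : Fin n → ℕ} {i j : Fin n} {f : MvPolynomial (Fin n) R} {M p : ℕ} {c μ : R} (hij : i ≠ j)
    (hwi : w i = p) (hwj : w j = 1) (hM : M ≠ 0) (hp : p ≠ 0)
    (hf : f - C c * (X i - C μ * X j ^ p) ^ M ∈ weightSupported R w (Set.Iio (p * M))) :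
    ∃ (F : MvPolynomial (Fin n) R) (hF : i ∉ F.vars),
      degreeOf i (shear i F hF f) ≤ M ∧ degreeOf j (shear i F hF f) < p * M := by
  set F := C μ * X j ^ p with hF_def
  have hF : i ∉ F.vars := notMem_vars_C_mul (notMem_vars_X_pow hij p) μ
  have hFw : F ∈ weightSupported R w (Set.Iic (w i)) := by
    rw [hF_def, ← smul_eq_C_mul, hwi]
    simpa [hwj] using Submodule.smul_mem _ μ <| pow_mem_weightSupported_Iic
      (X_mem_weightSupported (R := R) (Set.self_mem_Iic (a := w j))) p
  have hrest := shear_mem_weightSupported_Iio hF hFw hf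
  set g := f - C c * (X i - F) ^ M with hg_def
  have hshear : shear i F hF f = C c * X i ^ M + shear i F hF g := by
    rw [hg_def, map_sub, map_mul, map_pow, map_sub, shear_X_self, shear_eq_self hF hF,
      add_sub_cancel_right, algEquiv_C, add_sub_cancel]
  have hi : degreeOf i (shear i F hF g) < M :=
    degreeOf_lt_of_mem_weightSupported (w := w) (Nat.pos_of_ne_zero hM) (by rwa [hwi, mul_comm])
  have hj : degreeOf j (shear i F hF g) < p * M :=
    degreeOf_lt_of_mem_weightSupported (w := w) (Nat.pos_of_ne_zero (mul_ne_zero hp hM))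
      (by rwa [hwj, mul_one])
  refine ⟨F, hF, ?_, ?_⟩ <;> rw [hshear]
  · refine (degreeOf_add_le _ _ _).trans (max_le ?_ hi.le)
    exact (degreeOf_C_mul_le _ _ _).trans (degreeOf_X_self_pow i M).le
  · refine (degreeOf_add_le _ _ _).trans_lt (max_lt ?_ hj)
    exact (degreeOf_C_mul_le _ _ _).trans_lt <|
      (degreeOf_X_pow_of_ne M hij.symm).trans_lt (Nat.zero_le _ |>.trans_lt hj)

theorem IsLocallyNilpotent.exists_shear_degreeOf_add_degreeOf_lt {K : Type*} [Field K] [CharZero K]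
    {f : MvPolynomial (Fin 2) K}
    (hf : IsLocallyNilpotent (jacobianDerivation f)) (h0 : degreeOf 0 f ≠ 0)
    (h1 : degreeOf 1 f ≠ 0) :
    ∃ (i : Fin 2) (F : MvPolynomial (Fin 2) K) (hF : i ∉ F.vars),
      degreeOf 0 (shear i F hF f) + degreeOf 1 (shear i F hF f) <
        degreeOf 0 f + degreeOf 1 f := by
  obtain ⟨p, q, M, c, μ, hpq, hμ, hp, hq, hmem⟩ := hf.exists_sub_C_mul_sub_pow_mem h0 h1
  have hp0 : p ≠ 0 := left_ne_zero_of_mul (hp ▸ h0)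
  have hq0 : q ≠ 0 := left_ne_zero_of_mul (hq ▸ h1)
  have hM : M ≠ 0 := right_ne_zero_of_mul (hp ▸ h0)
  obtain rfl | rfl := hpq
  · have hform : C c * (X 1 ^ q - C μ * X 0 ^ 1) ^ M =
        C (c * (-μ) ^ M) * (X 0 - C μ⁻¹ * X 1 ^ q : MvPolynomial (Fin 2) K) ^ M := by
      have hC : C μ * C μ⁻¹ = (1 : MvPolynomial (Fin 2) K) := by
        rw [← C_mul, mul_inv_cancel₀ hμ, C_1]
      rw [C_mul, C_pow, mul_assoc, ← mul_pow, C_neg]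
      congr 2
      linear_combination -X 1 ^ q * hC
    rw [hform, one_mul, mul_comm M] at hmem
    obtain ⟨F, hF, hle, hlt⟩ :=
      exists_shear_degreeOf_le_and_lt zero_ne_one rfl rfl hM hq0 hmem
    exact ⟨0, F, hF, by rw [hp, hq, one_mul]; exact add_lt_add_of_le_of_lt hle hlt⟩
  · rw [pow_one, mul_one] at hmem
    obtain ⟨F, hF, hle, hlt⟩ :=
      exists_shear_degreeOf_le_and_lt one_ne_zero rfl rfl hM hp0 hmem
    exact ⟨1, F, hF, by rw [hp, hq, one_mul]; exact add_lt_add_of_lt_of_le hlt hle⟩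

end DegreeReduction

section Tame

theorem exists_eq_C_mul_X_add_of_pderiv_eq_C {R σ : Type*} [CommRing R] [NoZeroDivisors R]
    [CharZero R] {f : MvPolynomial σ R} {i : σ} {a : R} (h : pderiv i f = C a) :
    ∃ r, i ∉ r.vars ∧ f = C a * X i + r := by
  refine ⟨f - C a * X i, notMem_vars_of_pderiv_eq_zero ?_, (add_sub_cancel _ _).symm⟩
  rw [map_sub, pderiv_C_mul, pderiv_X_self, h, mul_one, sub_self]

theorem isLinearAut_renameEquiv_inv {R : Type*} [CommRing R] {n : ℕ} (e : Equiv.Perm (Fin n)) :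
    IsLinearAut (renameEquiv R e)⁻¹ := fun i =>
  ⟨Pi.single (e⁻¹ i) 1, by simp [AlgEquiv.aut_inv, Pi.single_apply, apply_ite, ite_mul]⟩

variable {K : Type*} [Field K] {φ : MvPolynomial (Fin 2) K ≃ₐ[K] MvPolynomial (Fin 2) K}

theorem isTame_of_triangular {a b d : K} {r : MvPolynomial (Fin 2) K} (ha : a ≠ 0) (hd : d ≠ 0)
    (hr : 1 ∉ r.vars) (h0 : φ (X 0) = C a * X 0 + C b) (h1 : φ (X 1) = C d * X 1 + r) :
    IsTame φ := by
  have hr' : 1 ∉ (C (-d⁻¹) * r).vars := notMem_vars_C_mul hr _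
  have hb' : 0 ∉ (C (-(a⁻¹ * b)) : MvPolynomial (Fin 2) K).vars := by
    rw [vars_C]
    exact Finset.notMem_empty 0
  refine .of_shear_mul hr' (.of_shear_mul hb' (IsLinearAut.isTame (Fin.forall_fin_two.2 ⟨?_, ?_⟩)))
  · have hab : C a * C (-(a⁻¹ * b)) = (-C b : MvPolynomial (Fin 2) K) := by
      rw [← C_mul, mul_neg, mul_inv_cancel_left₀ ha, C_neg]
    refine ⟨![a, 0], ?_⟩
    rw [AlgEquiv.mul_apply, AlgEquiv.mul_apply, h0, map_add, map_mul, algEquiv_C, algEquiv_C,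
      shear_X_of_ne hr' zero_ne_one, map_add, map_mul, algEquiv_C, algEquiv_C, shear_X_self,
      mul_add, hab, neg_add_cancel_right]
    simp
  · have hdr : C d * (C (-d⁻¹) * r) = -r := by
      rw [← mul_assoc, ← C_mul, mul_neg, mul_inv_cancel₀ hd, C_neg, C_1, neg_one_mul]
    refine ⟨![0, d], ?_⟩
    rw [AlgEquiv.mul_apply, AlgEquiv.mul_apply, h1, map_add, map_mul, algEquiv_C, shear_X_self,
      shear_eq_self hr' hr, mul_add, hdr, neg_add_cancel_right, map_mul, algEquiv_C,
      shear_X_of_ne hb' one_ne_zero]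
    simp

variable [CharZero K]

theorem isTame_of_notMem_vars (h : 1 ∉ (φ (X 0)).vars) : IsTame φ := by
  have hJ := isUnit_jacobianDerivation_algEquiv φ
  rw [jacobianDerivation_apply, pderiv_eq_zero_of_notMem_vars h, zero_mul, sub_zero,
    IsUnit.mul_iff, isUnit_iff_eq_C_of_isReduced, isUnit_iff_eq_C_of_isReduced] at hJ
  obtain ⟨⟨a, ha, hφ0⟩, d, hd, hφ1⟩ := hJ
  obtain ⟨s, hs0, hs⟩ := exists_eq_C_mul_X_add_of_pderiv_eq_C hφ0
  obtain ⟨r, hr1, hr⟩ := exists_eq_C_mul_X_add_of_pderiv_eq_C hφ1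
  have hs1 : 1 ∉ s.vars := notMem_vars_of_pderiv_eq_zero <| by
    have := pderiv_eq_zero_of_notMem_vars h
    rwa [hs, map_add, pderiv_C_mul, pderiv_X_of_ne zero_ne_one, mul_zero, zero_add] at this
  have hsC : s = C (coeff 0 s) := vars_eq_empty_iff_eq_C.1 <|
    Finset.eq_empty_of_forall_notMem (Fin.forall_fin_two.2 ⟨hs0, hs1⟩)
  exact isTame_of_triangular ha.ne_zero hd.ne_zero hr1 (hsC ▸ hs) hr

end Tame

theorem jung_every_automorphism_of_plane_is_tame_general {K : Type*} [Field K] [CharZero K]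
    (φ : MvPolynomial (Fin 2) K ≃ₐ[K] MvPolynomial (Fin 2) K) : IsTame φ := by
  induction hN : degreeOf 0 (φ (X 0)) + degreeOf 1 (φ (X 0)) using Nat.strong_induction_on
    generalizing φ with | _ N ih
  by_cases h1 : degreeOf 1 (φ (X 0)) = 0
  · exact isTame_of_notMem_vars fun h => mem_vars_iff_degreeOf_ne_zero.1 h h1
  by_cases h0 : degreeOf 0 (φ (X 0)) = 0
  · refine .of_mul (.inr (isLinearAut_renameEquiv_inv (.swap 0 1)))
      (isTame_of_notMem_vars fun h => mem_vars_iff_degreeOf_ne_zero.1 h ?_)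
    exact (degreeOf_rename_of_injective (Equiv.swap (0 : Fin 2) 1).injective 0).trans h0
  · obtain ⟨i, F, hF, hlt⟩ :=
      (isLocallyNilpotent_jacobianDerivation_algEquiv φ).exists_shear_degreeOf_add_degreeOf_lt h0 h1
    exact .of_shear_mul hF (ih _ (hN ▸ hlt) _ rfl)

/-- **Jung's theorem.** Every `K`-algebra automorphism of the polynomial ring in two
variables over an algebraically closed field of characteristic zero is tame. -/
theorem jung_every_automorphism_of_plane_is_tame
    {K : Type*} [Field K] [IsAlgClosed K] [CharZero K]
    (φ : MvPolynomial (Fin 2) K ≃ₐ[K] MvPolynomial (Fin 2) K) :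
    IsTame φ :=
  jung_every_automorphism_of_plane_is_tame_general φ
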